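/- Let ⪯ be a pre-order on a set Ω, let γ be a partition, and let v be a column-standard γ-tableau with entries in Ω. If τ ∈ CPP(γ) and τ is not the identity, then (v·τ) ⪯_row v and it is not the case that v ⪯_row (v·τ); that is, v·τ ≺_row v. -/

import Mathlib

/-!
Let `i` be the lowest row containing a box moved by `τ⁻¹`. Below row `i` the tableaux `v·τ` and `v`
coincide. Since `τ⁻¹` fixes all boxes below row `i` and preserves columns, it sends each box of
row `i` to a box weakly above it in the same column, so column-standardness gives
`(v·τ)(i,j) ⪯ v(i,j)` for every `j`, strictly for at least one `j`. To see that this pointwise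
strictness survives arbitrary reorderings of the row, take such a `j`, put `a = v(i,j)`, and count
the entries in the up-set `{x | a ⪯ x}`: row `i` of `v` has strictly more of them than row `i` of
`v·τ` (`countP_map_lt`), whereas `v ⪯_row v·τ` would give the opposite weak inequality
(`countP_le_of_forall₂`).
-/

/-- The boxes of the Young diagram of `μ : ℕ → ℕ`, zero-indexed:
row `i` consists of the boxes `(i, j)` for `j < μ i`. -/
abbrev Box (μ : ℕ → ℕ) : Type := {p : ℕ × ℕ // p.2 < μ p.1}

/-- The group of column place permutations: permutations of the boxes mapping every box to a box
in the same column. -/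
def CPP (μ : ℕ → ℕ) (τ : Equiv.Perm (Box μ)) : Prop :=
  ∀ b, ((τ b : ℕ × ℕ)).2 = ((b : ℕ × ℕ)).2

/-- The place permutation action: `(t·τ)(p) = t(τ⁻¹ p)`. -/
def placePerm (μ : ℕ → ℕ) {Ω : Type*} (t : Box μ → Ω) (τ : Equiv.Perm (Box μ)) : Box μ → Ω :=
  fun b => t (τ⁻¹ b)

/-- The multiset of entries of the tableau `t` in row `i`. -/
def rowM (μ : ℕ → ℕ) {Ω : Type*} (t : Box μ → Ω) (i : ℕ) : Multiset Ω :=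
  ((Finset.range (μ i)).attach.val).map fun j => t ⟨(i, j.1), Finset.mem_range.mp j.2⟩

/-- The relation `u ⪯_row v` induced by a pre-order `r` on the entries: either the multisets of
entries of `u` and `v` agree in every row, or, letting `i` be the largest (lowest) row
where they differ, the entries of `u` and `v` in row `i` may be listed as `α₁, …, α_d` and
`β₁, …, β_d` with `αₛ ⪯ βₛ` for all `s`. -/
def RowLE (μ : ℕ → ℕ) {Ω : Type*} (r : Ω → Ω → Prop) (u v : Box μ → Ω) : Prop :=
  (∀ i, rowM μ u i = rowM μ v i) ∨
  ∃ i, rowM μ u i ≠ rowM μ v i ∧ (∀ i', i < i' → rowM μ u i' = rowM μ v i') ∧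
    ∃ l l' : List Ω, (l : Multiset Ω) = rowM μ u i ∧ (l' : Multiset Ω) = rowM μ v i ∧
      List.Forall₂ r l l'

/-- A tableau is column-standard (for the pre-order `r`) if the entries of each column, read from
top to bottom, form a chain in the associated strict relation `≺`. -/
def ColumnStandard (μ : ℕ → ℕ) {Ω : Type*} (r : Ω → Ω → Prop) (v : Box μ → Ω) : Prop :=
  ∀ i i' j (h : j < μ i) (h' : j < μ i'), i < i' →
    r (v ⟨(i, j), h⟩) (v ⟨(i', j), h'⟩) ∧ ¬ r (v ⟨(i', j), h'⟩) (v ⟨(i, j), h⟩)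

/-- The number of entries in a principal up-set is monotone under entrywise comparison of lists. -/
theorem countP_le_of_forall₂ {Ω : Type*} {r : Ω → Ω → Prop}
    (htrans : ∀ a b c, r a b → r b c → r a c) (a : Ω) [DecidablePred (r a)] {l l' : List Ω}
    (h : List.Forall₂ r l l') :
    Multiset.countP (r a) (l : Multiset Ω) ≤ Multiset.countP (r a) (l' : Multiset Ω) := by
  simp only [Multiset.coe_countP]
  induction h with
  | nil => simp
  | @cons x y l l' hxy _ ih =>
    simp only [List.countP_cons, decide_eq_true_eq]
    by_cases hx : r a x
    · simp [hx, htrans _ _ _ hx hxy, ih]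
    · simp only [hx, if_false]; omega

/-- If `f ⪯ g` pointwise on a finite set, and `f` is not above `g` at `x₀`, then `g` takes values in
the up-set of `g x₀` strictly more often than `f` does. -/
theorem countP_map_lt {Ω ι : Type*} {r : Ω → Ω → Prop} (hrefl : ∀ a, r a a)
    (htrans : ∀ a b c, r a b → r b c → r a c) (s : Finset ι) (f g : ι → Ω)
    (hle : ∀ x ∈ s, r (f x) (g x)) (x₀ : ι) (hx₀ : x₀ ∈ s) (hlt : ¬ r (g x₀) (f x₀))
    [DecidablePred (r (g x₀))] :
    Multiset.countP (r (g x₀)) (s.val.map f) < Multiset.countP (r (g x₀)) (s.val.map g) := by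
  rw [Multiset.countP_map, Multiset.countP_map]
  change (s.filter fun x => r (g x₀) (f x)).card < (s.filter fun x => r (g x₀) (g x)).card
  apply Finset.card_lt_card
  rw [Finset.ssubset_iff_of_subset]
  · exact ⟨x₀, by simp [hx₀, hrefl], by simp [hlt]⟩
  · intro x hx
    rw [Finset.mem_filter] at hx ⊢
    exact ⟨hx.1, htrans _ _ _ hx.2 (hle x hx.1)⟩

/-- A nontrivial permutation of a Young diagram has a lowest row containing a moved box. -/
theorem exists_lowest_moved_row {μ : ℕ → ℕ} {k : ℕ} (hk : ∀ i, k ≤ i → μ i = 0)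
    {σ : Equiv.Perm (Box μ)} (hσ : σ ≠ 1) :
    ∃ b : Box μ, σ b ≠ b ∧ ∀ c : Box μ, b.1.1 < c.1.1 → σ c = c := by
  classical
  let P : ℕ → Prop := fun i => ∃ b : Box μ, b.1.1 = i ∧ σ b ≠ b
  have hPk : ∀ i, P i → i ≤ k := by
    rintro _ ⟨b, rfl, -⟩
    by_contra! h
    have h1 := hk _ h.le
    have h2 := b.2
    omega
  obtain ⟨b₀, hb₀⟩ : ∃ b, σ b ≠ b := by
    by_contra! h
    exact hσ (Equiv.ext h)
  have hP₀ : P b₀.1.1 := ⟨b₀, rfl, hb₀⟩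
  obtain ⟨b, hb, hmoved⟩ := Nat.findGreatest_spec (hPk _ hP₀) hP₀
  refine ⟨b, hmoved, fun c hc => ?_⟩
  by_contra hne
  have hPc : P c.1.1 := ⟨c, rfl, hne⟩
  have := Nat.le_findGreatest (hPk _ hPc) hPc
  omega

/-- **Lemma 2.5(ii) (Paget–Wildon).** Let `⪯` be a pre-order on a set `Ω`, let `γ` (here `μ`) be a
partition and let `v` be a column-standard `γ`-tableau with entries in `Ω`.  If `τ ∈ CPP(γ)` and
`τ ≠ id` then `v·τ ≺_row v`, i.e. `v·τ ⪯_row v` and not `v ⪯_row v·τ`. -/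
theorem columnStandard_placePerm_lt_row {Ω : Type*} (r : Ω → Ω → Prop)
    (hrefl : ∀ a, r a a) (htrans : ∀ a b c, r a b → r b c → r a c)
    (μ : ℕ → ℕ) (hμ : ∀ i, μ (i + 1) ≤ μ i) (k : ℕ) (hk : ∀ i, k ≤ i → μ i = 0)
    (v : Box μ → Ω) (hv : ColumnStandard μ r v)
    (τ : Equiv.Perm (Box μ)) (hτ : CPP μ τ) (hτ1 : τ ≠ 1) :
    RowLE μ r (placePerm μ v τ) v ∧ ¬ RowLE μ r v (placePerm μ v τ) := by
  classical
  have hcol : ∀ b, ((τ⁻¹ b : Box μ) : ℕ × ℕ).2 = (b : ℕ × ℕ).2 := fun b => by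
    simpa using (hτ (τ⁻¹ b)).symm
  obtain ⟨b, hb, hfix⟩ := exists_lowest_moved_row hk (inv_ne_one.mpr hτ1)
  set i := b.1.1 with hi
  have hup : ∀ c : Box μ, c.1.1 = i → τ⁻¹ c ≠ c → (τ⁻¹ c).1.1 < i := by
    intro c hc hne
    by_contra! h
    rcases h.eq_or_lt with h | h
    · exact hne (Subtype.ext (Prod.ext (h.symm.trans hc.symm) (hcol c)))
    -- a moved box cannot land on a fixed box below row `i`, by injectivity
    · exact hne (τ⁻¹.injective (hfix _ h))
  have hstrict : ∀ c : Box μ, c.1.1 = i → τ⁻¹ c ≠ c →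
      r (v (τ⁻¹ c)) (v c) ∧ ¬ r (v c) (v (τ⁻¹ c)) := by
    intro c hc hne
    have h1 := hup c hc hne
    have h2 := hcol c
    have h3 := (τ⁻¹ c).2
    rw [h2] at h3
    have e : τ⁻¹ c = ⟨((τ⁻¹ c).1.1, c.1.2), h3⟩ := Subtype.ext (Prod.ext rfl h2)
    rw [e]
    exact hv _ _ _ h3 c.2 (hc ▸ h1)
  have hle : ∀ c : Box μ, c.1.1 = i → r (v (τ⁻¹ c)) (v c) := by
    intro c hc
    by_cases h : τ⁻¹ c = c
    · rw [h]; exact hrefl _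
    · exact (hstrict c hc h).1
  have hbelow : ∀ i', i < i' → rowM μ (placePerm μ v τ) i' = rowM μ v i' := by
    intro i' hi'
    refine Multiset.map_congr rfl fun j _ => ?_
    simp only [placePerm]
    rw [hfix _ hi']
  have hcount : Multiset.countP (r (v b)) (rowM μ (placePerm μ v τ) i) <
      Multiset.countP (r (v b)) (rowM μ v i) :=
    countP_map_lt hrefl htrans (Finset.range (μ i)).attach
      (fun j => placePerm μ v τ ⟨(i, j.1), Finset.mem_range.mp j.2⟩)
      (fun j => v ⟨(i, j.1), Finset.mem_range.mp j.2⟩)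
      (fun j _ => hle _ rfl) ⟨b.1.2, Finset.mem_range.mpr b.2⟩ (Finset.mem_attach _ _)
      (hstrict b rfl hb).2
  have hne : rowM μ (placePerm μ v τ) i ≠ rowM μ v i := fun h => by
    rw [h] at hcount
    exact lt_irrefl _ hcount
  constructor
  · refine Or.inr ⟨i, hne, hbelow,
      (Finset.range (μ i)).attach.toList.map
        fun j => placePerm μ v τ ⟨(i, j.1), Finset.mem_range.mp j.2⟩,
      (Finset.range (μ i)).attach.toList.map fun j => v ⟨(i, j.1), Finset.mem_range.mp j.2⟩,
      ?_, ?_, ?_⟩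
    · rw [← Multiset.map_coe, Finset.coe_toList]; rfl
    · rw [← Multiset.map_coe, Finset.coe_toList]; rfl
    · rw [List.forall₂_map_left_iff, List.forall₂_map_right_iff, List.forall₂_same]
      exact fun j _ => hle _ rfl
  · rintro (h | ⟨i', hi', heq, l, l', hl, hl', hll⟩)
    · exact hne (h i).symm
    · rcases lt_trichotomy i i' with h | h | h
      · exact hi' (hbelow i' h).symm
      · subst h
        have := countP_le_of_forall₂ htrans (v b) hll
        rw [hl, hl'] at this
        omega
      · exact hne (heq i h).symm
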